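/- Let Ω be any smooth domain of ℝ^N, p > 1, u0 ∈ L^∞(Ω), and let u be a blow-up solution of the semilinear heat problem with blow-up time T < ∞ satisfying the type I estimate ‖u(t)‖_{L^∞(Ω)} ≤ M(T−t)^{−β} for 0 ≤ t < T, with some M > 0. Suppose that liminf_{t→T} ∫_{Ω ∩ B_{r_0}(a_0)} |u(t,x)|^{q*} dx < ∞ for some a_0 ∈ ℝ^N and r_0 > 0, where q* = N(p−1)/2. Then u has at most finitely many blow-up points in the ball B_{r_0}(a_0). -/

import Mathlib

open MeasureTheory Filter Set Metric
open scoped ENNReal Topology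

noncomputable section

/-- The Laplacian of `f : ℝ^N → ℝ`, as the sum of second partial derivatives. -/
def lap {N : ℕ} (f : EuclideanSpace ℝ (Fin N) → ℝ) (x : EuclideanSpace ℝ (Fin N)) : ℝ :=
  ∑ i, fderiv ℝ (fun y => fderiv ℝ f y (EuclideanSpace.single i 1)) x (EuclideanSpace.single i 1)

/-- `u` is a classical solution of the semilinear heat equation `u_t = Δu + |u|^{p-1}u`
on `(0,T) × Ω`, with Dirichlet boundary condition on `∂Ω` and initial data `u0`. -/
def IsClassicalSol {N : ℕ} (Ω : Set (EuclideanSpace ℝ (Fin N)))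
    (u0 : EuclideanSpace ℝ (Fin N) → ℝ) (p T : ℝ)
    (u : ℝ → EuclideanSpace ℝ (Fin N) → ℝ) : Prop :=
  (∀ t ∈ Ioo (0:ℝ) T, ContDiffOn ℝ 2 (u t) Ω) ∧
  (∀ x ∈ Ω, ∀ t ∈ Ioo (0:ℝ) T, DifferentiableAt ℝ (fun τ => u τ x) t) ∧
  ContinuousOn (fun q : ℝ × EuclideanSpace ℝ (Fin N) => u q.1 q.2)
    (Ioo (0:ℝ) T ×ˢ closure Ω) ∧
  (∀ t ∈ Ioo (0:ℝ) T, ∀ x ∈ Ω,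
    deriv (fun τ => u τ x) t = lap (u t) x + |u t x| ^ (p - 1) * u t x) ∧
  (∀ t ∈ Ioo (0:ℝ) T, ∀ x ∈ frontier Ω, u t x = 0) ∧
  (∀ x ∈ Ω, u 0 x = u0 x)

/-- The `L^∞(Ω)` norm (as an extended real), of a function on `ℝ^N`. -/
def supNormOn {N : ℕ} (Ω : Set (EuclideanSpace ℝ (Fin N)))
    (f : EuclideanSpace ℝ (Fin N) → ℝ) : ℝ≥0∞ :=
  ⨆ x ∈ Ω, ENNReal.ofReal |f x|

/-- `a` is a blow-up point of `u` at time `T`: `limsup_{t→T, x→a} |u(t,x)| = ∞`. -/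
def BlowupPoint {N : ℕ} (Ω : Set (EuclideanSpace ℝ (Fin N)))
    (u : ℝ → EuclideanSpace ℝ (Fin N) → ℝ) (T : ℝ)
    (a : EuclideanSpace ℝ (Fin N)) : Prop :=
  ∀ C : ℝ, ∀ ε > 0, ∃ t ∈ Ioo (T - ε) T, ∃ x ∈ Ω ∩ ball a ε, C < |u t x|


/-- Pointwise Laplacian through coordinate lines. -/
def HasLap {N : ℕ} (f : EuclideanSpace ℝ (Fin N) → ℝ) (x : EuclideanSpace ℝ (Fin N))
    (L : ℝ) : Prop :=
  ∃ (g : Fin N → EuclideanSpace ℝ (Fin N) → ℝ) (l : Fin N → ℝ),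
    (∀ i y, HasDerivAt (fun h : ℝ => f (y + h • EuclideanSpace.single i 1)) (g i y) 0) ∧
    (∀ i, HasDerivAt (fun h : ℝ => g i (x + h • EuclideanSpace.single i 1)) (l i) 0) ∧
    ∑ i, l i = L

lemma HasLap.add {N : ℕ} {f f' : EuclideanSpace ℝ (Fin N) → ℝ} {x : EuclideanSpace ℝ (Fin N)}
    {L L' : ℝ} (h : HasLap f x L) (h' : HasLap f' x L') :
    HasLap (fun y => f y + f' y) x (L + L') := by
  obtain ⟨g, l, h1, h2, h3⟩ := h
  obtain ⟨g', l', h1', h2', h3'⟩ := h'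
  refine ⟨fun i y => g i y + g' i y, fun i => l i + l' i, fun i y => (h1 i y).add (h1' i y),
    fun i => (h2 i).add (h2' i), ?_⟩
  rw [Finset.sum_add_distrib, h3, h3']

lemma HasLap.const_mul {N : ℕ} {f : EuclideanSpace ℝ (Fin N) → ℝ} {x : EuclideanSpace ℝ (Fin N)}
    {L : ℝ} (c : ℝ) (h : HasLap f x L) :
    HasLap (fun y => c * f y) x (c * L) := by
  obtain ⟨g, l, h1, h2, h3⟩ := h
  refine ⟨fun i y => c * g i y, fun i => c * l i, fun i y => (h1 i y).const_mul c,
    fun i => (h2 i).const_mul c, ?_⟩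
  rw [← Finset.mul_sum, h3]

lemma hasLap_const {N : ℕ} (x : EuclideanSpace ℝ (Fin N)) (c : ℝ) :
    HasLap (fun _ => c) x 0 :=
  ⟨fun _ _ => 0, fun _ => 0, fun _ _ => hasDerivAt_const _ _, fun _ => hasDerivAt_const _ _,
    by simp⟩

lemma HasLap.sum {N : ℕ} {ι : Type*} (F : Finset ι)
    {f : ι → EuclideanSpace ℝ (Fin N) → ℝ} {x : EuclideanSpace ℝ (Fin N)}
    {L : ι → ℝ} (h : ∀ i ∈ F, HasLap (f i) x (L i)) :
    HasLap (fun y => ∑ i ∈ F, f i y) x (∑ i ∈ F, L i) := by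
  classical
  induction F using Finset.induction_on with
  | empty => simpa using hasLap_const x 0
  | insert a s ha ih =>
    simp only [Finset.sum_insert ha]
    exact (h a (by simp)).add (ih fun i hi => h i (by simp [hi]))

lemma hasDerivAt_normSq_line {N : ℕ} (b y : EuclideanSpace ℝ (Fin N)) (i : Fin N) :
    HasDerivAt (fun h : ℝ => ‖y + h • EuclideanSpace.single i (1:ℝ) - b‖ ^ 2)
      (2 * (y - b) i) 0 := by
  have h1 : HasDerivAt (fun h : ℝ => y + h • EuclideanSpace.single i (1:ℝ) - b)
      (EuclideanSpace.single i (1:ℝ)) 0 := by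
    have := (((hasDerivAt_id (0:ℝ)).smul_const
      (EuclideanSpace.single i (1:ℝ))).const_add y).sub_const b
    simpa using this
  have := h1.norm_sq
  simpa [EuclideanSpace.inner_single_right] using this

lemma hasLap_radial {N : ℕ} {f f' f'' : ℝ → ℝ} (b x : EuclideanSpace ℝ (Fin N))
    (h1 : ∀ r, HasDerivAt f (f' r) r) (h2 : ∀ r, HasDerivAt f' (f'' r) r) :
    HasLap (fun y => f (‖y - b‖ ^ 2)) x
      (4 * ‖x - b‖ ^ 2 * f'' (‖x - b‖ ^ 2) + 2 * N * f' (‖x - b‖ ^ 2)) := by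
  refine ⟨fun i y => f' (‖y - b‖ ^ 2) * (2 * (y - b) i),
    fun i => f'' (‖x - b‖ ^ 2) * (2 * (x - b) i) * (2 * (x - b) i) + f' (‖x - b‖ ^ 2) * 2,
    ?_, ?_, ?_⟩
  · intro i y
    have := HasDerivAt.comp (h₂ := f) (0:ℝ) (by simpa using h1 (‖y - b‖ ^ 2))
      (hasDerivAt_normSq_line b y i)
    simpa [Function.comp_def] using this
  · intro i
    have e1 := HasDerivAt.comp (h₂ := f') (h₂' := f'' (‖x - b‖ ^ 2)) (0:ℝ)
      (by simpa using h2 (‖x - b‖ ^ 2)) (hasDerivAt_normSq_line b x i)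
    have e2 : HasDerivAt (fun h : ℝ => 2 * (x + h • EuclideanSpace.single i (1:ℝ) - b) i) 2 0 := by
      have := ((((hasDerivAt_id (0:ℝ)).const_add (x i)).sub_const (b i)).const_mul 2)
      simpa using this
    have := e1.fun_mul e2
    simpa [Function.comp_def] using this
  · rw [Finset.sum_add_distrib]
    have : ‖x - b‖ ^ 2 = ∑ i, ((x - b) i) ^ 2 := by
      rw [EuclideanSpace.norm_eq, Real.sq_sqrt (by positivity)]; simp
    have e : ∑ i, f'' (‖x - b‖ ^ 2) * (2 * (x - b) i) * (2 * (x - b) i)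
        = 4 * ‖x - b‖ ^ 2 * f'' (‖x - b‖ ^ 2) := by
      conv_rhs => rw [mul_comm, mul_comm 4, ← mul_assoc]; enter [1, 2]; rw [this]
      rw [Finset.mul_sum, Finset.sum_mul]
      exact Finset.sum_congr rfl fun i _ => by ring
    rw [e]; simp; ring

/-- One-dimensional second derivative test. -/
lemma second_deriv_nonneg {f g : ℝ → ℝ} {l : ℝ} (hmin : IsLocalMin f 0)
    (h1 : ∀ᶠ h in 𝓝 (0:ℝ), HasDerivAt f (g h) h) (h2 : HasDerivAt g l 0) : 0 ≤ l := by
  by_contra hl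
  push Not at hl
  have hd : deriv f =ᶠ[𝓝 0] g := h1.mono fun h hh => hh.deriv
  have hdd : deriv (deriv f) 0 = l := by rw [hd.deriv_eq]; exact h2.deriv
  have hmax : IsLocalMax f 0 := isLocalMax_of_deriv_deriv_neg (by rw [hdd]; exact hl)
    hmin.deriv_eq_zero h1.self_of_nhds.continuousAt
  have hc : f =ᶠ[𝓝 0] fun _ => f 0 := by
    filter_upwards [hmin, hmax] with h a b using le_antisymm b a
  have : deriv f =ᶠ[𝓝 0] fun _ => 0 := by
    have := hc.deriv
    simpa using this
  have e := this.deriv_eq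
  rw [hdd] at e
  simp at e
  linarith

lemma lap_le_of_isLocalMin {N : ℕ} {Ω : Set (EuclideanSpace ℝ (Fin N))} (hΩ : IsOpen Ω)
    {v w : EuclideanSpace ℝ (Fin N) → ℝ} (hv : ContDiffOn ℝ 2 v Ω)
    {x : EuclideanSpace ℝ (Fin N)} (hx : x ∈ Ω) {L : ℝ} (hw : HasLap w x L)
    (hmin : IsLocalMin (fun y => w y - v y) x) : lap v x ≤ L := by
  obtain ⟨g, l, h1, h2, h3⟩ := hw
  rw [← h3]
  unfold lap
  refine Finset.sum_le_sum fun i _ => ?_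
  set e : EuclideanSpace ℝ (Fin N) := EuclideanSpace.single i 1 with he
  have hline : ∀ y, HasDerivAt (fun h : ℝ => y + h • e) e 0 := fun y => by
    simpa using ((hasDerivAt_id (0:ℝ)).smul_const e).const_add y
  have hlc : Continuous (fun h : ℝ => x + h • e) := by fun_prop
  have hlt : Tendsto (fun h : ℝ => x + h • e) (𝓝 0) (𝓝 x) := by
    have := hlc.tendsto 0; simpa using this
  have hmem : ∀ᶠ h in 𝓝 (0:ℝ), x + h • e ∈ Ω := hlt (hΩ.mem_nhds hx)
  have hvd : ∀ y ∈ Ω, DifferentiableAt ℝ v y := fun y hy =>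
    (hv.contDiffAt (hΩ.mem_nhds hy)).differentiableAt (by norm_num)
  have hfd : DifferentiableAt ℝ (fun y => fderiv ℝ v y e) x := by
    have : ContDiffAt ℝ 1 (fderiv ℝ v) x :=
      (hv.contDiffAt (hΩ.mem_nhds hx)).fderiv_right (by norm_num)
    exact (this.differentiableAt (by norm_num)).clm_apply (differentiableAt_const _)
  have key := second_deriv_nonneg (f := fun h : ℝ => w (x + h • e) - v (x + h • e))
    (g := fun h => g i (x + h • e) - fderiv ℝ v (x + h • e) e)
    (l := l i - fderiv ℝ (fun y => fderiv ℝ v y e) x e) ?_ ?_ ?_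
  · linarith
  · have : ∀ᶠ h in 𝓝 (0:ℝ), w x - v x ≤ w (x + h • e) - v (x + h • e) := hlt hmin
    filter_upwards [this] with h hh
    simpa using hh
  · filter_upwards [hmem] with h hh
    have a1 : HasDerivAt (fun k : ℝ => w (x + k • e)) (g i (x + h • e)) h := by
      have := h1 i (x + h • e)
      have t := HasDerivAt.comp_sub_const (f := fun k : ℝ => w (x + h • e + k • e)) h h
        (by simpa using this)
      refine t.congr_of_eventuallyEq (Eventually.of_forall fun k => ?_)
      simp only [sub_smul]; congr 1; abel
    have a2 : HasDerivAt (fun k : ℝ => v (x + k • e)) (fderiv ℝ v (x + h • e) e) h := by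
      have hl : HasDerivAt (fun k : ℝ => x + k • e) e h := by
        simpa using ((hasDerivAt_id h).smul_const e).const_add x
      exact (hvd _ hh).hasFDerivAt.comp_hasDerivAt h hl
    exact a1.sub a2
  · refine (h2 i).sub ?_
    have := HasFDerivAt.comp_hasDerivAt (l := fun y => fderiv ℝ v y e) (f := fun h : ℝ => x + h • e)
      (0:ℝ) (by simpa using hfd.hasFDerivAt) (hline x)
    simpa [Function.comp_def] using this

lemma IsClassicalSol.neg {N : ℕ} {Ω : Set (EuclideanSpace ℝ (Fin N))}
    {u0 : EuclideanSpace ℝ (Fin N) → ℝ} {p T : ℝ} {u : ℝ → EuclideanSpace ℝ (Fin N) → ℝ}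
    (h : IsClassicalSol Ω u0 p T u) :
    IsClassicalSol Ω (fun x => - u0 x) p T (fun t x => - u t x) := by
  obtain ⟨h1, h2, h3, h4, h5, h6⟩ := h
  refine ⟨fun t ht => (h1 t ht).neg, fun x hx t ht => (h2 x hx t ht).neg, h3.neg, ?_, ?_, ?_⟩
  · intro t ht x hx
    have e : lap (fun x => - u t x) x = - lap (u t) x := by
      unfold lap
      rw [← Finset.sum_neg_distrib]
      refine Finset.sum_congr rfl fun i _ => ?_
      have : (fun y => fderiv ℝ (fun x => - u t x) y (EuclideanSpace.single i (1:ℝ)))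
          = fun y => - (fderiv ℝ (u t) y (EuclideanSpace.single i (1:ℝ))) := by
        funext y
        rw [fderiv_fun_neg]; rfl
      rw [this, fderiv_fun_neg]; rfl
    rw [e, deriv.fun_neg, h4 t ht x hx, abs_neg]
    ring
  · intro t ht x hx
    simp [h5 t ht x hx]
  · intro x hx
    simp [h6 x hx]

/-- Comparison with a strict supersolution. -/
lemma compare {N : ℕ} {Ω : Set (EuclideanSpace ℝ (Fin N))} (hΩ : IsOpen Ω)
    {u0 : EuclideanSpace ℝ (Fin N) → ℝ} {p T : ℝ} {u : ℝ → EuclideanSpace ℝ (Fin N) → ℝ}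
    (hsol : IsClassicalSol Ω u0 p T u) {t1 t2 : ℝ} (h1 : 0 < t1) (h2 : t2 < T)
    (b : EuclideanSpace ℝ (Fin N)) (ρ : ℝ)
    (W Wt L : ℝ → EuclideanSpace ℝ (Fin N) → ℝ)
    (hWc : ContinuousOn (fun q : ℝ × EuclideanSpace ℝ (Fin N) => W q.1 q.2) (Icc t1 t2 ×ˢ univ))
    (hWt : ∀ t ∈ Icc t1 t2, ∀ x, HasDerivAt (fun τ => W τ x) (Wt t x) t)
    (hL : ∀ t ∈ Icc t1 t2, ∀ x, HasLap (W t) x (L t x))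
    (hpos : ∀ t ∈ Icc t1 t2, ∀ x, 0 < W t x)
    (hinit : ∀ x ∈ Ω, x ∈ closedBall b ρ → u t1 x < W t1 x)
    (hside : ∀ t ∈ Icc t1 t2, ∀ x ∈ Ω, dist x b = ρ → u t x < W t x)
    (hsuper : ∀ t ∈ Icc t1 t2, ∀ x ∈ Ω, u t x = W t x →
      L t x + |W t x| ^ (p - 1) * W t x < Wt t x) :
    ∀ t ∈ Icc t1 t2, ∀ x ∈ Ω, x ∈ closedBall b ρ → u t x < W t x := by
  obtain ⟨s1, s2, s3, s4, s5, -⟩ := hsol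
  have hIoo : ∀ t ∈ Icc t1 t2, t ∈ Ioo (0:ℝ) T := fun t ht =>
    ⟨h1.trans_le ht.1, ht.2.trans_lt h2⟩
  by_contra hcon
  push Not at hcon
  obtain ⟨t', ht', x', hx', hxb', hle'⟩ := hcon
  set D : Set (ℝ × EuclideanSpace ℝ (Fin N)) :=
    Icc t1 t2 ×ˢ (closure Ω ∩ closedBall b ρ) with hD
  have hDc : IsCompact D :=
    isCompact_Icc.prod ((isCompact_closedBall b ρ).inter_left isClosed_closure)
  have hφ : ContinuousOn (fun q : ℝ × EuclideanSpace ℝ (Fin N) => W q.1 q.2 - u q.1 q.2) D := by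
    refine (hWc.mono ?_).sub (s3.mono ?_)
    · exact prod_mono subset_rfl (subset_univ _)
    · exact prod_mono hIoo inter_subset_left
  set B := D ∩ (fun q : ℝ × EuclideanSpace ℝ (Fin N) => W q.1 q.2 - u q.1 q.2) ⁻¹' Iic 0 with hB
  have hBc : IsCompact B :=
    hDc.of_isClosed_subset (hφ.preimage_isClosed_of_isClosed hDc.isClosed isClosed_Iic)
      inter_subset_left
  have hBne : B.Nonempty := ⟨(t', x'), ⟨ht', subset_closure hx', hxb'⟩, by simpa using hle'⟩
  obtain ⟨⟨t, x⟩, ⟨⟨ht, hxc, hxb⟩, hle⟩, hmin⟩ := hBc.exists_isMinOn hBne continuous_fst.continuousOn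
  simp only at ht hxc hxb
  simp only [mem_preimage, mem_Iic, sub_nonpos] at hle
  -- before time t everything is positive
  have hbefore : ∀ τ ∈ Icc t1 t2, τ < t → ∀ y ∈ closure Ω, y ∈ closedBall b ρ → u τ y < W τ y := by
    intro τ hτ hlt y hy hyb
    by_contra hc
    push Not at hc
    have : (τ, y) ∈ B := ⟨⟨hτ, hy, hyb⟩, by simpa using hc⟩
    have := hmin this
    simp at this
    linarith
  have hxΩ : x ∈ Ω := by
    by_contra hn
    have : x ∈ frontier Ω := by
      rw [hΩ.frontier_eq]; exact ⟨hxc, hn⟩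
    rw [s5 t (hIoo t ht) x this] at hle
    exact absurd (hpos t ht x) (not_lt.2 hle)
  have ht1 : t1 < t := by
    rcases ht.1.lt_or_eq with h | h
    · exact h
    · subst h
      exact absurd (hinit x hxΩ hxb) (not_lt.2 hle)
  have hxball : x ∈ ball b ρ := by
    rcases (mem_closedBall.1 hxb).lt_or_eq with h | h
    · exact h
    · exact absurd (hside t ht x hxΩ h) (not_lt.2 hle)
  -- nonnegativity at time t
  have hnonneg : ∀ y ∈ closure Ω, y ∈ closedBall b ρ → u t y ≤ W t y := by
    intro y hy hyb
    have hct : ContinuousWithinAt (fun τ => W τ y - u τ y) (Ico t1 t) t := by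
      have := (hφ (t, y) ⟨ht, hy, hyb⟩).comp (s := Ico t1 t) (f := fun τ : ℝ => (τ, y))
        (by fun_prop) (fun τ hτ => ⟨⟨hτ.1, hτ.2.le.trans ht.2⟩, hy, hyb⟩)
      exact this
    have hne : (𝓝[Ico t1 t] t).NeBot := by
      rw [← mem_closure_iff_nhdsWithin_neBot, closure_Ico ht1.ne]
      exact ⟨ht1.le, le_rfl⟩
    have := ge_of_tendsto (b := (0:ℝ)) hct ?_
    · linarith
    · filter_upwards [self_mem_nhdsWithin] with τ hτ
      have := hbefore τ ⟨hτ.1, hτ.2.le.trans ht.2⟩ hτ.2 y hy hyb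
      linarith
  have heq : u t x = W t x := le_antisymm (hnonneg x hxc hxb) hle
  have hlmin : IsLocalMin (fun y => W t y - u t y) x := by
    filter_upwards [hΩ.mem_nhds hxΩ, isOpen_ball.mem_nhds hxball] with y hy hyb
    have := hnonneg y (subset_closure hy) (ball_subset_closedBall hyb)
    linarith
  have hlap := lap_le_of_isLocalMin hΩ (s1 t (hIoo t ht)) hxΩ (hL t ht x) hlmin
  have hd : HasDerivAt (fun τ => W τ x - u τ x) (Wt t x - deriv (fun τ => u τ x) t) t :=
    (hWt t ht x).sub (s2 x hxΩ t (hIoo t ht)).hasDerivAt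
  have hdle : Wt t x - deriv (fun τ => u τ x) t ≤ 0 := by
    have hsl := (hasDerivWithinAt_iff_tendsto_slope' (s := Iio t) (by simp)).1
      hd.hasDerivWithinAt
    refine le_of_tendsto hsl ?_
    filter_upwards [Ioo_mem_nhdsLT ht1] with τ hτ
    have := hbefore τ ⟨hτ.1.le, hτ.2.le.trans ht.2⟩ hτ.2 x hxc hxb
    rw [slope_def_field]
    apply div_nonpos_of_nonneg_of_nonpos <;> linarith [hτ.2]
  have hs := hsuper t ht x hxΩ heq
  rw [s4 t (hIoo t ht) x hxΩ, heq] at hdle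
  linarith

lemma cover {N : ℕ} {E : Set (EuclideanSpace ℝ (Fin N))} (hE : IsCompact E) {V : ℝ}
    (hV : volume E < ENNReal.ofReal V) :
    ∃ F : Finset (EuclideanSpace ℝ (Fin N) × ℝ), (∀ q ∈ F, 0 < q.2) ∧
      (∀ x ∈ E, ∃ q ∈ F, dist x q.1 ≤ 5 * q.2) ∧
      (∑ q ∈ F, q.2 ^ N) * (volume (ball (0 : EuclideanSpace ℝ (Fin N)) 1)).toReal ≤ V := by
  classical
  obtain ⟨U, hEU, hU, hUV⟩ := E.exists_isOpen_lt_of_lt _ hV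
  have hr : ∀ x : EuclideanSpace ℝ (Fin N), ∃ r : ℝ, 0 < r ∧ (x ∈ E → closedBall x r ⊆ U) := by
    intro x
    by_cases hx : x ∈ E
    · obtain ⟨r, hr, h⟩ := nhds_basis_closedBall.mem_iff.1 (hU.mem_nhds (hEU hx))
      exact ⟨r, hr, fun _ => h⟩
    · exact ⟨1, one_pos, fun h => absurd h hx⟩
  choose r hr0 hrU using hr
  obtain ⟨s, hsE, hs⟩ := hE.elim_nhds_subcover (fun x => ball x (r x))
    (fun x _ => ball_mem_nhds x (hr0 x))
  obtain ⟨R, hR⟩ := (s.finite_toSet.image r).bddAbove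
  obtain ⟨u, hus, hdis, hcov⟩ := Vitali.exists_disjoint_subfamily_covering_enlargement_closedBall
    (t := (s : Set (EuclideanSpace ℝ (Fin N)))) (x := id) (r := r) (R := R)
    (fun a ha => hR ⟨a, ha, rfl⟩) 5 (by norm_num)
  have hufin : u.Finite := s.finite_toSet.subset hus
  set u' := hufin.toFinset with hu'
  refine ⟨u'.image (fun x => (x, r x)), ?_, ?_, ?_⟩
  · intro q hq
    obtain ⟨x, -, rfl⟩ := Finset.mem_image.1 hq
    exact hr0 x
  · intro x hx
    obtain ⟨a, ha, hxa⟩ := mem_iUnion₂.1 (hs hx)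
    obtain ⟨c, hc, hac⟩ := hcov a ha
    refine ⟨(c, r c), Finset.mem_image.2 ⟨c, by simpa [hu'] using hc, rfl⟩, ?_⟩
    exact hac (ball_subset_closedBall hxa)
  · rw [Finset.sum_image (by intro a _ b _ h; exact (Prod.mk.inj h).1)]
    simp only
    have hsub : ⋃ x ∈ u', ball x (r x) ⊆ U := by
      refine iUnion₂_subset fun x hx => ?_
      have : x ∈ u := by simpa [hu'] using hx
      exact ball_subset_closedBall.trans (hrU x (hsE x (hus this)))
    have hm : volume (⋃ x ∈ u', ball x (r x)) = ∑ x ∈ u', volume (ball x (r x)) := by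
      refine measure_biUnion_finset ?_ (fun x _ => measurableSet_ball)
      intro a ha b hb hab
      have ha' : a ∈ u := by simpa [hu'] using ha
      have hb' : b ∈ u := by simpa [hu'] using hb
      exact (hdis ha' hb' hab).mono ball_subset_closedBall ball_subset_closedBall
    have hle : ∑ x ∈ u', volume (ball x (r x)) ≤ ENNReal.ofReal V := by
      rw [← hm]; exact (measure_mono hsub).trans hUV.le
    have hVp : 0 ≤ V := by
      by_contra h
      rw [ENNReal.ofReal_of_nonpos (by linarith)] at hV
      exact absurd hV (by simp)
    have := ENNReal.toReal_mono ENNReal.ofReal_ne_top hle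
    rw [ENNReal.toReal_ofReal hVp, ENNReal.toReal_sum (fun x _ => measure_ball_lt_top.ne)] at this
    refine le_trans (le_of_eq ?_) this
    rw [Finset.sum_mul]
    refine Finset.sum_congr rfl fun x _ => ?_
    rw [Measure.addHaar_ball_of_pos volume x (hr0 x), ENNReal.toReal_mul, ENNReal.toReal_ofReal
      (by have := hr0 x; positivity)]
    simp

/-- The (rescaled) heat kernel. -/
def gam {N : ℕ} (q : EuclideanSpace ℝ (Fin N) × ℝ) (τ : ℝ) (x : EuclideanSpace ℝ (Fin N)) : ℝ :=
  (q.2 ^ 2) ^ ((N : ℝ) / 2) * (τ + q.2 ^ 2) ^ (-((N : ℝ) / 2)) *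
    Real.exp (-(‖x - q.1‖ ^ 2) / (4 * (τ + q.2 ^ 2)))

def gamt {N : ℕ} (q : EuclideanSpace ℝ (Fin N) × ℝ) (τ : ℝ) (x : EuclideanSpace ℝ (Fin N)) : ℝ :=
  gam q τ x * (‖x - q.1‖ ^ 2 / (4 * (τ + q.2 ^ 2) ^ 2) - (N : ℝ) / 2 / (τ + q.2 ^ 2))

lemma gam_nonneg {N : ℕ} (q : EuclideanSpace ℝ (Fin N) × ℝ) (hq : 0 < q.2) {τ : ℝ} (hτ : 0 ≤ τ)
    (x : EuclideanSpace ℝ (Fin N)) : 0 ≤ gam q τ x := by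
  unfold gam; positivity

lemma gam_init {N : ℕ} (q : EuclideanSpace ℝ (Fin N) × ℝ) (hq : 0 < q.2)
    (x : EuclideanSpace ℝ (Fin N)) (hx : dist x q.1 ≤ 5 * q.2) :
    Real.exp (-(25 / 4)) ≤ gam q 0 x := by
  unfold gam
  have h2 : 0 < q.2 ^ 2 := by positivity
  rw [zero_add, ← Real.rpow_add h2, add_neg_cancel, Real.rpow_zero, one_mul]
  apply Real.exp_le_exp.2
  rw [neg_div, neg_le_neg_iff, div_le_div_iff₀ (by positivity) (by norm_num)]
  rw [dist_eq_norm] at hx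
  have : ‖x - q.1‖ ^ 2 ≤ (5 * q.2) ^ 2 := by gcongr
  linarith

lemma gam_le {N : ℕ} (q : EuclideanSpace ℝ (Fin N) × ℝ) (hq : 0 < q.2) {τ : ℝ} (hτ : 0 < τ)
    (x : EuclideanSpace ℝ (Fin N)) : gam q τ x ≤ q.2 ^ N * τ ^ (-((N : ℝ) / 2)) := by
  unfold gam
  have e : (q.2 ^ 2) ^ ((N : ℝ) / 2) = q.2 ^ N := by
    rw [← Real.rpow_natCast q.2 2, ← Real.rpow_mul hq.le, ← Real.rpow_natCast]
    congr 1; push_cast; ring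
  rw [e]
  have h1 : (τ + q.2 ^ 2) ^ (-((N : ℝ) / 2)) ≤ τ ^ (-((N : ℝ) / 2)) := by
    apply Real.rpow_le_rpow_of_nonpos hτ (by nlinarith)
    have : (0:ℝ) ≤ N := by positivity
    linarith
  have h2 : Real.exp (-(‖x - q.1‖ ^ 2) / (4 * (τ + q.2 ^ 2))) ≤ 1 := by
    rw [Real.exp_le_one_iff, neg_div]
    have : 0 ≤ ‖x - q.1‖ ^ 2 / (4 * (τ + q.2 ^ 2)) := by positivity
    linarith
  calc _ ≤ q.2 ^ N * τ ^ (-((N : ℝ) / 2)) * 1 := by gcongr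
    _ = _ := mul_one _

lemma gam_deriv {N : ℕ} (q : EuclideanSpace ℝ (Fin N) × ℝ) (hq : 0 < q.2) {τ : ℝ} (hτ : 0 ≤ τ)
    (x : EuclideanSpace ℝ (Fin N)) : HasDerivAt (fun τ => gam q τ x) (gamt q τ x) τ := by
  have hs : 0 < τ + q.2 ^ 2 := by positivity
  have h0 : HasDerivAt (fun τ : ℝ => τ + q.2 ^ 2) 1 τ := (hasDerivAt_id τ).add_const _
  have h1 := h0.rpow_const (p := -((N : ℝ) / 2)) (Or.inl hs.ne')
  have h2 := ((hasDerivAt_const τ (-(‖x - q.1‖ ^ 2))).fun_div (h0.const_mul 4) (by positivity)).exp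
  have h3 := (h1.const_mul ((q.2 ^ 2) ^ ((N : ℝ) / 2))).fun_mul h2
  refine h3.congr_deriv ?_
  unfold gamt gam
  rw [Real.rpow_sub_one hs.ne']
  field_simp
  ring

lemma gam_lap {N : ℕ} (q : EuclideanSpace ℝ (Fin N) × ℝ) (hq : 0 < q.2) {τ : ℝ} (hτ : 0 ≤ τ)
    (x : EuclideanSpace ℝ (Fin N)) : HasLap (gam q τ) x (gamt q τ x) := by
  have hs : 0 < τ + q.2 ^ 2 := by positivity
  set c := 4 * (τ + q.2 ^ 2) with hc
  have hcp : 0 < c := by positivity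
  have hd : ∀ r : ℝ, HasDerivAt (fun r : ℝ => Real.exp (-r / c)) (-Real.exp (-r / c) / c) r := by
    intro r
    have := (((hasDerivAt_id r).neg).div_const c).exp
    refine this.congr_deriv ?_
    simp; ring
  have hd2 : ∀ r : ℝ, HasDerivAt (fun r : ℝ => -Real.exp (-r / c) / c) (Real.exp (-r / c) / c ^ 2) r := by
    intro r
    refine ((hd r).neg.div_const c).congr_deriv ?_
    field_simp
  have := (hasLap_radial q.1 x hd hd2).const_mul
    ((q.2 ^ 2) ^ ((N : ℝ) / 2) * (τ + q.2 ^ 2) ^ (-((N : ℝ) / 2)))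
  have key : HasLap (gam q τ) x _ := this
  convert key using 1
  unfold gamt gam
  rw [← hc]
  have : τ + q.2 ^ 2 = c / 4 := by rw [hc]; ring
  rw [this]
  field_simp
  ring

lemma gam_cont {N : ℕ} (q : EuclideanSpace ℝ (Fin N) × ℝ) (hq : 0 < q.2) (t0 : ℝ) :
    ContinuousOn (fun z : ℝ × EuclideanSpace ℝ (Fin N) => gam q (z.1 - t0) z.2)
      (Ici t0 ×ˢ univ) := by
  have h : ∀ z ∈ (Ici t0 ×ˢ univ : Set (ℝ × EuclideanSpace ℝ (Fin N))), 0 < z.1 - t0 + q.2 ^ 2 := by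
    rintro z ⟨hz, -⟩
    have : t0 ≤ z.1 := hz
    have : 0 ≤ z.1 - t0 := by linarith
    positivity
  unfold gam
  refine ContinuousOn.mul (ContinuousOn.mul continuousOn_const ?_) ?_
  · exact ContinuousOn.rpow_const (by fun_prop) (fun z hz => Or.inl (h z hz).ne')
  · refine Real.continuous_exp.comp_continuousOn (ContinuousOn.div (by fun_prop) (by fun_prop) ?_)
    intro z hz
    have := h z hz
    positivity

lemma pot {p M D w : ℝ} (hp : 1 < p) (hM : 0 < M) (hD : 0 < D) (hw : 0 < w)
    (h : w ≤ M * D ^ (-(1 / (p - 1)))) : |w| ^ (p - 1) * w ≤ M ^ (p - 1) / D * w := by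
  have hp' : 0 < p - 1 := by linarith
  rw [abs_of_pos hw]
  gcongr
  calc w ^ (p - 1) ≤ (M * D ^ (-(1 / (p - 1)))) ^ (p - 1) := by gcongr
    _ = M ^ (p - 1) / D := by
      rw [Real.mul_rpow hM.le (by positivity), ← Real.rpow_mul hD.le]
      have : -(1 / (p - 1)) * (p - 1) = -1 := by field_simp
      rw [this, Real.rpow_neg_one]; rfl

lemma vol_est {N : ℕ} {Ω : Set (EuclideanSpace ℝ (Fin N))} (hΩ : IsOpen Ω)
    {v : EuclideanSpace ℝ (Fin N) → ℝ} (hc : ContinuousOn v (closure Ω))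
    (h0 : ∀ x ∈ frontier Ω, v x = 0) (b : EuclideanSpace ℝ (Fin N)) (ρ : ℝ) {e q c : ℝ}
    (he : 0 < e) (hq : 0 ≤ q)
    (hInt : ∫⁻ x in Ω ∩ closedBall b ρ, ENNReal.ofReal (|v x| ^ q) < ENNReal.ofReal c) :
    IsCompact {x | x ∈ closure Ω ∩ closedBall b ρ ∧ e ≤ |v x|} ∧
    volume {x | x ∈ closure Ω ∩ closedBall b ρ ∧ e ≤ |v x|} < ENNReal.ofReal (c / e ^ q) := by
  set E := {x | x ∈ closure Ω ∩ closedBall b ρ ∧ e ≤ |v x|} with hE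
  have hK : IsCompact (closure Ω ∩ closedBall b ρ) :=
    (isCompact_closedBall b ρ).inter_left isClosed_closure
  have hEc : IsCompact E := by
    have : IsClosed E := by
      have := (hc.mono (inter_subset_left (t := closedBall b ρ))).abs.preimage_isClosed_of_isClosed
        hK.isClosed (isClosed_Ici (a := e))
      exact this
    exact hK.of_isClosed_subset this fun x hx => hx.1
  refine ⟨hEc, ?_⟩
  have hsub : E ⊆ Ω ∩ closedBall b ρ := by
    rintro x ⟨⟨hx, hxb⟩, hev⟩
    refine ⟨?_, hxb⟩
    by_contra hn
    have : x ∈ frontier Ω := by rw [hΩ.frontier_eq]; exact ⟨hx, hn⟩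
    rw [h0 x this] at hev
    simp at hev; linarith
  have h1 : ENNReal.ofReal (e ^ q) * volume E ≤ ∫⁻ x in E, ENNReal.ofReal (|v x| ^ q) := by
    rw [← setLIntegral_const]
    refine setLIntegral_mono' hEc.measurableSet fun x hx => ?_
    apply ENNReal.ofReal_le_ofReal
    exact Real.rpow_le_rpow he.le hx.2 hq
  have h2 := (h1.trans (lintegral_mono_set hsub)).trans_lt hInt
  have heq : 0 < e ^ q := by positivity
  rw [ENNReal.ofReal_div_of_pos heq, ENNReal.lt_div_iff_mul_lt (by simp [heq]) (by simp), mul_comm]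
  exact h2

set_option maxHeartbeats 1600000 in
lemma step1 (N : ℕ) {p M ε : ℝ} (hp : 1 < p) (hM : 0 < M) (hε : 0 < ε) :
    ∃ c > 0, ∃ R > 0, ∀ (Ω : Set (EuclideanSpace ℝ (Fin N))) (_ : IsOpen Ω)
      (u0 : EuclideanSpace ℝ (Fin N) → ℝ) (T : ℝ) (u : ℝ → EuclideanSpace ℝ (Fin N) → ℝ)
      (_ : IsClassicalSol Ω u0 p T u)
      (_ : ∀ t ∈ Ico (0:ℝ) T, ∀ x ∈ Ω, |u t x| ≤ M * (T - t) ^ (-(1 / (p - 1))))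
      (t0 : ℝ) (_ : 0 < t0) (_ : t0 < T) (b : EuclideanSpace ℝ (Fin N)) (ρ : ℝ) (_ : 0 < ρ)
      (_ : R * (T - t0) ≤ ρ ^ 2)
      (_ : ∫⁻ x in Ω ∩ closedBall b ρ, ENNReal.ofReal (|u t0 x| ^ ((N : ℝ) * (p - 1) / 2))
        < ENNReal.ofReal c) (_ : b ∈ Ω),
      u ((t0 + T) / 2) b < ε * (T - (t0 + T) / 2) ^ (-(1 / (p - 1))) := by
  have hp' : 0 < p - 1 := by linarith
  set β := 1 / (p - 1) with hβ
  have hβ0 : 0 < β := by positivity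
  set q := (N : ℝ) * (p - 1) / 2 with hq
  have hq0 : 0 ≤ q := by positivity
  set A := Real.exp (M ^ (p - 1) + 1) with hA
  have hA0 : 0 < A := Real.exp_pos _
  set ε0 := ε / (4 * A) with hε0
  have hε00 : 0 < ε0 := by positivity
  set ω := (volume (ball (0 : EuclideanSpace ℝ (Fin N)) 1)).toReal with hω
  have hω0 : 0 < ω := ENNReal.toReal_pos (measure_ball_pos volume _ one_pos).ne'
    measure_ball_lt_top.ne
  set C := Real.exp (25 / 4) * M with hC
  have hC0 : 0 < C := by positivity
  set M2 := (2:ℝ) ^ β * M with hM2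
  have hM20 : 0 < M2 := by positivity
  set c := ε0 ^ q * ω * ε0 / (C * 2 ^ ((N : ℝ) / 2)) with hc
  have hc0 : 0 < c := by positivity
  refine ⟨c, hc0, (M2 * N + 1) / ε0, by positivity, ?_⟩
  intro Ω hΩ u0 T u hsol htypeI t0 ht0 ht0T b ρ hρ hR hInt hb
  set s := T - t0 with hs
  have hs0 : 0 < s := by linarith
  set S := s ^ (-β) with hS
  have hS0 : 0 < S := by positivity
  have hts : T - (t0 + T) / 2 = s / 2 := by rw [hs]; ring
  have ht01 : t0 ∈ Ioo 0 T := ⟨ht0, ht0T⟩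
  have hhalf : (s / 2) ^ (-β) = 2 ^ β * S := by
    rw [Real.div_rpow hs0.le (by norm_num), Real.rpow_neg (by norm_num : (0:ℝ) ≤ 2), hS]
    field_simp
  -- the bad set
  have hcont : ContinuousOn (u t0) (closure Ω) :=
    hsol.2.2.1.comp (f := fun x => (t0, x)) (by fun_prop) (fun x hx => ⟨ht01, hx⟩)
  obtain ⟨hEc, hEv⟩ := vol_est hΩ hcont (hsol.2.2.2.2.1 t0 ht01) b ρ (e := ε0 * S)
    (by positivity) hq0 hInt
  obtain ⟨F, hF0, hFc, hFs⟩ := cover hEc hEv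
  rw [← hω] at hFs
  set μ := (2 * M ^ (p - 1) + 2) / s with hμ
  set k := M2 / ρ ^ 2 with hk
  have hk0 : 0 < k := by positivity
  set V : ℝ → EuclideanSpace ℝ (Fin N) → ℝ := fun t x =>
    S * (ε0 + k * (‖x - b‖ ^ 2 + 2 * N * (t - t0)) + C * ∑ z ∈ F, gam z (t - t0) x) with hV
  set G : ℝ → EuclideanSpace ℝ (Fin N) → ℝ := fun t x =>
    S * (k * (2 * N) + C * ∑ z ∈ F, gamt z (t - t0) x) with hG
  set t2 := (t0 + T) / 2 with ht2
  have hsum : ∀ t ∈ Icc t0 t2, ∀ x, 0 ≤ ∑ z ∈ F, gam z (t - t0) x := fun t ht x =>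
    Finset.sum_nonneg fun z hz => gam_nonneg z (hF0 z hz) (by linarith [ht.1]) x
  have hVpos : ∀ t ∈ Icc t0 t2, ∀ x, 0 < V t x := by
    intro t ht x
    have h1 := hsum t ht x
    have h2 : 0 ≤ t - t0 := by linarith [ht.1]
    simp only [hV]
    positivity
  have hμ0 : 0 < μ := by positivity
  have hexp1 : ∀ t ∈ Icc t0 t2, 1 ≤ Real.exp (μ * (t - t0)) := by
    intro t ht
    have h2 : 0 ≤ t - t0 := by linarith [ht.1]
    apply Real.one_le_exp
    positivity
  have hVt : ∀ t ∈ Icc t0 t2, ∀ x, HasDerivAt (fun τ => V τ x) (G t x) t := by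
    intro t ht x
    have h2 : 0 ≤ t - t0 := by linarith [ht.1]
    have e1 : HasDerivAt (fun τ => ∑ z ∈ F, gam z (τ - t0) x) (∑ z ∈ F, gamt z (t - t0) x) t := by
      refine HasDerivAt.fun_sum fun z hz => ?_
      exact (gam_deriv z (hF0 z hz) h2 x).comp_sub_const t t0
    have e2 : HasDerivAt (fun τ => k * (‖x - b‖ ^ 2 + 2 * N * (τ - t0))) (k * (2 * N)) t := by
      have := ((((hasDerivAt_id t).sub_const t0).const_mul (2 * (N:ℝ))).const_add
        (‖x - b‖ ^ 2)).const_mul k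
      simpa using this
    exact ((e2.const_add ε0).add (e1.const_mul C)).const_mul S
  have hVL : ∀ t ∈ Icc t0 t2, ∀ x, HasLap (V t) x (G t x) := by
    intro t ht x
    have h2 : 0 ≤ t - t0 := by linarith [ht.1]
    have e1 : HasLap (fun x => ∑ z ∈ F, gam z (t - t0) x) x (∑ z ∈ F, gamt z (t - t0) x) :=
      HasLap.sum F fun z hz => gam_lap z (hF0 z hz) h2 x
    have e2 : HasLap (fun x : EuclideanSpace ℝ (Fin N) => ‖x - b‖ ^ 2) x (2 * N) := by
      have := hasLap_radial (f := id) (f' := fun _ => 1) (f'' := fun _ => 0) b x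
        (fun r => hasDerivAt_id r) (fun r => hasDerivAt_const _ _)
      simpa using this
    have e3 := (((hasLap_const x ε0).add ((e2.add
      (hasLap_const x (2 * N * (t - t0)))).const_mul k)).add (e1.const_mul C)).const_mul S
    simpa [hV, hG] using e3
  have hVc : ContinuousOn (fun q : ℝ × EuclideanSpace ℝ (Fin N) => V q.1 q.2)
      (Icc t0 t2 ×ˢ univ) := by
    have e1 : ContinuousOn (fun q : ℝ × EuclideanSpace ℝ (Fin N) => ∑ z ∈ F, gam z (q.1 - t0) q.2)
        (Icc t0 t2 ×ˢ univ) :=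
      continuousOn_finsetSum F fun z hz => (gam_cont z (hF0 z hz) t0).mono
        (prod_mono Icc_subset_Ici_self subset_rfl)
    simp only [hV]
    refine continuousOn_const.mul (ContinuousOn.add (by fun_prop) (continuousOn_const.mul e1))
  have key := compare hΩ hsol ht0 (t2 := t2) (by rw [ht2]; linarith) b ρ
    (fun t x => Real.exp (μ * (t - t0)) * V t x)
    (fun t x => μ * (Real.exp (μ * (t - t0)) * V t x) + Real.exp (μ * (t - t0)) * G t x)
    (fun t x => Real.exp (μ * (t - t0)) * G t x) ?_ ?_ ?_ ?_ ?_ ?_ ?_ t2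
    ⟨by rw [ht2]; linarith, le_rfl⟩ b hb (mem_closedBall_self hρ.le)
  · refine key.trans_le ?_
    have ht20 : t2 - t0 = s / 2 := by rw [ht2, hs]; ring
    have hsp : 0 < s / 2 := by positivity
    have eA : Real.exp (μ * (t2 - t0)) = A := by
      rw [ht20, hA, hμ]; congr 1; field_simp
    have g1 : ∑ z ∈ F, gam z (t2 - t0) b ≤ (∑ z ∈ F, z.2 ^ N) * (s / 2) ^ (-((N : ℝ) / 2)) := by
      rw [ht20, Finset.sum_mul]
      exact Finset.sum_le_sum fun z hz => gam_le z (hF0 z hz) hsp b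
    have g2 : (∑ z ∈ F, z.2 ^ N) ≤ c / (ε0 * S) ^ q / ω := by
      rw [le_div_iff₀ hω0]; exact hFs
    have g3 : c / (ε0 * S) ^ q / ω * (s / 2) ^ (-((N : ℝ) / 2)) = ε0 / C := by
      have a1 : (ε0 * S) ^ q = ε0 ^ q * s ^ (-((N : ℝ) / 2)) := by
        rw [Real.mul_rpow hε00.le hS0.le, hS, ← Real.rpow_mul hs0.le]
        congr 2
        rw [hβ, hq]; field_simp
      have a2 : (s / 2) ^ (-((N : ℝ) / 2)) = s ^ (-((N : ℝ) / 2)) * 2 ^ ((N : ℝ) / 2) := by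
        rw [Real.div_rpow hs0.le (by norm_num), Real.rpow_neg (by norm_num : (0:ℝ) ≤ 2)]
        field_simp
      rw [a1, a2, hc]
      have : 0 < ε0 ^ q := by positivity
      have : 0 < s ^ (-((N : ℝ) / 2)) := by positivity
      have : (0:ℝ) < 2 ^ ((N : ℝ) / 2) := by positivity
      generalize ε0 ^ q = X at *
      generalize s ^ (-((N : ℝ) / 2)) = Y at *
      generalize (2:ℝ) ^ ((N : ℝ) / 2) = Z at *
      field_simp
    have g4 : C * ∑ z ∈ F, gam z (t2 - t0) b ≤ ε0 := by
      have : ∑ z ∈ F, gam z (t2 - t0) b ≤ ε0 / C := by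
        rw [← g3]
        refine g1.trans ?_
        gcongr
      calc _ ≤ C * (ε0 / C) := by gcongr
        _ = ε0 := by field_simp
    have g5 : k * (‖b - b‖ ^ 2 + 2 * N * (t2 - t0)) ≤ ε0 := by
      rw [ht20, hk]
      simp only [sub_self, norm_zero]
      rw [div_mul_eq_mul_div, div_le_iff₀ (by positivity)]
      have : (M2 * N + 1) * s ≤ ρ ^ 2 * ε0 := by
        rw [div_mul_eq_mul_div, div_le_iff₀ hε00] at hR
        exact hR
      nlinarith
    have g6 : V t2 b ≤ S * (3 * ε0) := by
      simp only [hV]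
      gcongr
      linarith
    simp only [eA]
    rw [hts, hhalf]
    have h2β : (1:ℝ) ≤ 2 ^ β := Real.one_le_rpow (by norm_num) hβ0.le
    calc A * V t2 b ≤ A * (S * (3 * ε0)) := by gcongr
      _ = ε * (3 / 4) * S := by rw [hε0]; field_simp
      _ ≤ ε * 1 * S := by gcongr; norm_num
      _ ≤ ε * 2 ^ β * S := by gcongr
      _ = _ := by ring
  · exact ContinuousOn.mul (by fun_prop) hVc
  · intro t ht x
    have e0 : HasDerivAt (fun τ => Real.exp (μ * (τ - t0))) (Real.exp (μ * (t - t0)) * μ) t := by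
      have := (((hasDerivAt_id t).sub_const t0).const_mul μ).exp
      simpa using this
    refine (e0.fun_mul (hVt t ht x)).congr_deriv ?_
    ring
  · intro t ht x
    exact (hVL t ht x).const_mul _
  · intro t ht x
    have := hVpos t ht x
    positivity
  · intro x hx hxb
    have h0 : t0 ∈ Icc t0 t2 := ⟨le_rfl, by rw [ht2]; linarith⟩
    simp only [sub_self, mul_zero, Real.exp_zero, one_mul]
    have hsn := hsum t0 h0 x
    simp only [hV, sub_self, mul_zero, add_zero]
    rw [sub_self] at hsn
    by_cases hbad : ε0 * S ≤ |u t0 x|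
    · obtain ⟨z, hz, hzx⟩ := hFc x ⟨⟨subset_closure hx, hxb⟩, hbad⟩
      have h1 := gam_init z (hF0 z hz) x hzx
      have h2 : gam z 0 x ≤ ∑ z ∈ F, gam z 0 x :=
        Finset.single_le_sum (f := fun z => gam z 0 x)
          (fun z hz => gam_nonneg z (hF0 z hz) le_rfl x) hz
      have h3 : M ≤ C * ∑ z ∈ F, gam z 0 x := by
        calc M = C * Real.exp (-(25/4)) := by
              rw [hC, mul_right_comm, ← Real.exp_add]; simp
          _ ≤ _ := by gcongr; exact h1.trans h2
      have h4 := (le_abs_self _).trans (htypeI t0 ⟨ht0.le, ht0T⟩ x hx)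
      refine h4.trans_lt ?_
      rw [mul_comm]
      refine mul_lt_mul_of_pos_left ?_ hS0
      have : 0 ≤ k * ‖x - b‖ ^ 2 := by positivity
      linarith
    · push Not at hbad
      refine (le_abs_self _).trans_lt (hbad.trans_le ?_)
      rw [mul_comm]
      gcongr
      have : 0 ≤ k * ‖x - b‖ ^ 2 := by positivity
      have : 0 ≤ C * ∑ z ∈ F, gam z 0 x := by positivity
      linarith
  · intro t ht x hx hxρ
    have hle : s / 2 ≤ T - t := by rw [← hts]; linarith [ht.2]
    have htT : t < T := by linarith
    have h4 := (le_abs_self _).trans (htypeI t ⟨ht0.le.trans ht.1, htT⟩ x hx)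
    have h5 : (T - t) ^ (-β) ≤ (s / 2) ^ (-β) :=
      Real.rpow_le_rpow_of_nonpos (by positivity) hle (by linarith)
    rw [hhalf] at h5
    have h6 : u t x ≤ S * M2 := by
      calc u t x ≤ M * (T - t) ^ (-β) := h4
        _ ≤ M * (2 ^ β * S) := by gcongr
        _ = _ := by rw [hM2]; ring
    refine h6.trans_lt (lt_of_lt_of_le ?_ (le_mul_of_one_le_left (hVpos t ht x).le (hexp1 t ht)))
    simp only [hV]
    refine mul_lt_mul_of_pos_left ?_ hS0
    rw [← dist_eq_norm, hxρ]
    have h7 : k * ρ ^ 2 = M2 := by rw [hk]; field_simp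
    have h8 := hsum t ht x
    have h9 : 0 ≤ t - t0 := by linarith [ht.1]
    have h10 : 0 ≤ k * (2 * N * (t - t0)) := by positivity
    have h11 : 0 ≤ C * ∑ z ∈ F, gam z (t - t0) x := by positivity
    linarith
  · intro t ht x hx heq
    have hle : s / 2 ≤ T - t := by rw [← hts]; linarith [ht.2]
    have htT : t < T := by linarith
    have h4 := (le_abs_self _).trans (htypeI t ⟨ht0.le.trans ht.1, htT⟩ x hx)
    rw [heq] at h4
    have hVp := hVpos t ht x
    have hWp : 0 < Real.exp (μ * (t - t0)) * V t x := by positivity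
    have h5 := pot hp hM (by linarith : 0 < T - t) hWp h4
    have h6 : M ^ (p - 1) / (T - t) < μ := by
      calc M ^ (p - 1) / (T - t) ≤ M ^ (p - 1) / (s / 2) := by gcongr
        _ = (2 * M ^ (p - 1)) / s := by field_simp
        _ < μ := by rw [hμ]; gcongr; linarith
    have h7 := mul_lt_mul_of_pos_right h6 hWp
    linarith

lemma alg1 (m : ℕ) {K s D : ℝ} (r : ℝ) (hK : 0 < K) (hs : 0 < s) (hD : 0 < D) :
    1 / (K ^ (m + 2) * s) * (D ^ (m + 1))⁻¹ * r ^ (m + 2) = D / s * (r / (K * D)) ^ (m + 2) := by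
  rw [div_pow, mul_pow, pow_succ D (m + 1)]
  field_simp

lemma alg2 (m : ℕ) {K s D : ℝ} (r : ℝ) (hK : 0 < K) (hs : 0 < s) (hD : 0 < D) :
    1 / s + 1 / (K ^ (m + 2) * s) * ((m + 1) * (D ^ (m + 2))⁻¹) * r ^ (m + 2)
      = 1 / s * (1 + (m + 1) * (r / (K * D)) ^ (m + 2)) := by
  rw [div_pow, mul_pow]
  field_simp

lemma alg3 (m : ℕ) {K s D C : ℝ} (r : ℝ) (hK : 0 < K) (hs : 0 < s) (hD : 0 < D) (hC : K = 2 * C) :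
    1 / (K ^ (m + 2) * s) * (D ^ (m + 1))⁻¹ * (C * r ^ (m + 1))
      = 1 / s * (1 / 2 * (r / (K * D)) ^ (m + 1)) := by
  have : C = K / 2 := by linarith
  rw [div_pow, mul_pow, pow_succ K (m + 1), this]
  field_simp

lemma alg4 (m : ℕ) {d R : ℝ} (hd : 0 < d) :
    R ^ (m + 2) * (d ^ (m + 1))⁻¹ = d * (R / d) ^ (m + 2) := by
  rw [div_pow, pow_succ d (m + 1)]
  field_simp

set_option maxHeartbeats 1600000 in
lemma step2 (N : ℕ) {p M : ℝ} (hp : 1 < p) (hM : 0 < M) :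
    ∃ ε > 0, ∃ R > 0, ∀ (Ω : Set (EuclideanSpace ℝ (Fin N))) (_ : IsOpen Ω)
      (u0 : EuclideanSpace ℝ (Fin N) → ℝ) (T : ℝ) (u : ℝ → EuclideanSpace ℝ (Fin N) → ℝ)
      (_ : IsClassicalSol Ω u0 p T u)
      (_ : ∀ t ∈ Ico (0:ℝ) T, ∀ x ∈ Ω, |u t x| ≤ M * (T - t) ^ (-(1 / (p - 1))))
      (t1 : ℝ) (_ : 0 < t1) (_ : t1 < T) (b : EuclideanSpace ℝ (Fin N)) (ρ : ℝ) (_ : 0 < ρ)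
      (_ : R * (T - t1) ≤ ρ ^ 2)
      (_ : ∀ x ∈ Ω, x ∈ closedBall b ρ → u t1 x < ε * (T - t1) ^ (-(1 / (p - 1)))) (_ : b ∈ Ω),
      ∀ t ∈ Ico t1 T, u t b ≤ 2 * ε * (T - t1) ^ (-(1 / (p - 1))) := by
  have hp' : 0 < p - 1 := by linarith
  set β := 1 / (p - 1) with hβ
  have hβ0 : 0 < β := by positivity
  obtain ⟨m, hm⟩ := exists_nat_ge (3 * M ^ (p - 1) + β)
  have hMp : 0 < M ^ (p - 1) := by positivity
  set ε : ℝ := (1 / 7) ^ β / 3 with hε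
  have hε0 : 0 < ε := by positivity
  have h3ε : (3 * ε) ^ (p - 1) = 1 / 7 := by
    have : 3 * ε = (1 / 7) ^ β := by rw [hε]; ring
    rw [this, ← Real.rpow_mul (by norm_num)]
    have : β * (p - 1) = 1 := by rw [hβ]; field_simp
    rw [this, Real.rpow_one]
  set Cj : ℝ := 4 * ((m + 2) * (m + 1)) + 2 * N * (m + 2) with hCj
  have hCj0 : 0 < Cj := by positivity
  set K := 2 * Cj with hK
  have hK0 : 0 < K := by positivity
  set R' := M / ε + 1 with hR'
  have hR'1 : 1 ≤ R' := by
    have : 0 < M / ε := by positivity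
    linarith
  refine ⟨ε, hε0, K * R', by positivity, ?_⟩
  intro Ω hΩ u0 T u hsol htypeI t1 ht1 ht1T b ρ hρ hR hsmall hb t ht
  set s := T - t1 with hs
  have hs0 : 0 < s := by linarith
  set S := s ^ (-β) with hS
  have hS0 : 0 < S := by positivity
  set κ := 1 / (K ^ (m + 2) * s) with hκ
  have hκ0 : 0 < κ := by positivity
  set W : ℝ → EuclideanSpace ℝ (Fin N) → ℝ := fun t x =>
    S * ε * ((2 - (T - t) / s) + κ * ((T - t) ^ (m + 1))⁻¹ * (‖x - b‖ ^ 2) ^ (m + 2)) with hW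
  set Wt : ℝ → EuclideanSpace ℝ (Fin N) → ℝ := fun t x =>
    S * ε * (1 / s + κ * ((m + 1) * ((T - t) ^ (m + 2))⁻¹) * (‖x - b‖ ^ 2) ^ (m + 2)) with hWt
  set L : ℝ → EuclideanSpace ℝ (Fin N) → ℝ := fun t x =>
    S * ε * (κ * ((T - t) ^ (m + 1))⁻¹ * (Cj * (‖x - b‖ ^ 2) ^ (m + 1))) with hL
  have hd : ∀ τ ∈ Icc t1 t, 0 < T - τ ∧ T - τ ≤ s ∧ (T - τ) / s ≤ 1 ∧ 0 < (T - τ) / s := by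
    intro τ hτ
    have h1 : 0 < T - τ := by linarith [hτ.2, ht.2]
    have h2 : T - τ ≤ s := by linarith [hτ.1]
    exact ⟨h1, h2, by rw [div_le_one hs0]; exact h2, by positivity⟩
  have hWpos : ∀ τ ∈ Icc t1 t, ∀ x, 0 < W τ x := by
    intro τ hτ x
    obtain ⟨h1, h2, h3, h4⟩ := hd τ hτ
    have : 0 < 2 - (T - τ) / s := by linarith
    simp only [hW]
    positivity
  -- normal form
  have hWn : ∀ τ ∈ Icc t1 t, ∀ x, W τ x = S * ε * ((2 - (T - τ) / s) +
      (T - τ) / s * (‖x - b‖ ^ 2 / (K * (T - τ))) ^ (m + 2)) := by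
    intro τ hτ x
    obtain ⟨h1, h2, h3, h4⟩ := hd τ hτ
    simp only [hW, hκ]
    congr 2
    exact alg1 m _ hK0 hs0 h1
  have hWtn : ∀ τ ∈ Icc t1 t, ∀ x, Wt τ x = S * ε * (1 / s * (1 +
      (m + 1) * (‖x - b‖ ^ 2 / (K * (T - τ))) ^ (m + 2))) := by
    intro τ hτ x
    obtain ⟨h1, h2, h3, h4⟩ := hd τ hτ
    simp only [hWt, hκ]
    congr 1
    exact alg2 m _ hK0 hs0 h1
  have hLn : ∀ τ ∈ Icc t1 t, ∀ x, L τ x = S * ε * (1 / s * (1 / 2 *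
      (‖x - b‖ ^ 2 / (K * (T - τ))) ^ (m + 1))) := by
    intro τ hτ x
    obtain ⟨h1, h2, h3, h4⟩ := hd τ hτ
    simp only [hL, hκ]
    congr 1
    exact alg3 m _ hK0 hs0 h1 hK
  have key := compare hΩ hsol ht1 (t2 := t) ht.2 b ρ W Wt L ?_ ?_ ?_ hWpos ?_ ?_ ?_ t
    ⟨ht.1, le_rfl⟩ b hb (mem_closedBall_self hρ.le)
  · refine key.le.trans ?_
    obtain ⟨h1, h2, h3, h4⟩ := hd t ⟨ht.1, le_rfl⟩
    simp only [hW, sub_self, norm_zero]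
    rw [zero_pow two_ne_zero, zero_pow (by omega), mul_zero, add_zero]
    have : 0 < S * ε := by positivity
    nlinarith
  · have hne : ∀ q ∈ (Icc t1 t ×ˢ univ : Set (ℝ × EuclideanSpace ℝ (Fin N))),
        (T - q.1) ^ (m + 1) ≠ 0 := fun q hq => pow_ne_zero _ (hd q.1 hq.1).1.ne'
    have : ContinuousOn (fun q : ℝ × EuclideanSpace ℝ (Fin N) => ((T - q.1) ^ (m + 1))⁻¹)
      (Icc t1 t ×ˢ univ) := ContinuousOn.inv₀ (by fun_prop) hne
    simp only [hW]
    fun_prop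
  · intro τ hτ x
    obtain ⟨h1, h2, h3, h4⟩ := hd τ hτ
    have e0 : HasDerivAt (fun τ => T - τ) (-1) τ := (hasDerivAt_id τ).const_sub T
    have e1 := (e0.div_const s).const_sub 2
    have e2 := (((e0.fun_pow (m + 1)).fun_inv (pow_ne_zero _ h1.ne')).const_mul κ).mul_const
      ((‖x - b‖ ^ 2) ^ (m + 2))
    refine ((e1.add e2).const_mul (S * ε)).congr_deriv ?_
    simp only [hWt]
    congr 1
    have : m + 1 - 1 = m := by omega
    rw [this]
    push_cast
    field_simp
    ring
  · intro τ hτ x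
    have e1 := hasLap_radial (f := fun r => r ^ (m + 2)) (f' := fun r => (m + 2) * r ^ (m + 1))
      (f'' := fun r => (m + 2) * ((m + 1) * r ^ m)) b x
      (fun r => by simpa using hasDerivAt_pow (m + 2) r)
      (fun r => by simpa using (hasDerivAt_pow (m + 1) r).const_mul ((m:ℝ) + 2))
    have e2 := ((hasLap_const x (2 - (T - τ) / s)).add
      (e1.const_mul (κ * ((T - τ) ^ (m + 1))⁻¹))).const_mul (S * ε)
    have e3 : HasLap (W τ) x _ := e2
    convert e3 using 1
    simp only [hL, hCj]
    ring
  · intro x hx hxb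
    refine (hsmall x hx hxb).trans_le ?_
    simp only [hW]
    rw [← hs, div_self hs0.ne', mul_comm]
    have : 0 ≤ κ * (s ^ (m + 1))⁻¹ * (‖x - b‖ ^ 2) ^ (m + 2) := by positivity
    have : 0 < S * ε := by positivity
    nlinarith
  · intro τ hτ x hx hxρ
    obtain ⟨h1, h2, h3, h4⟩ := hd τ hτ
    have hty := (le_abs_self _).trans
      (htypeI τ ⟨ht1.le.trans hτ.1, by linarith⟩ x hx)
    refine hty.trans_lt ?_
    rw [hWn τ hτ x, ← dist_eq_norm, hxρ]
    set d := (T - τ) / s with hdd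
    have e1 : (T - τ) ^ (-β) = S * d ^ (-β) := by
      rw [hS, ← Real.mul_rpow hs0.le h4.le, hdd]
      congr 1; field_simp
    have e2 : R' / d ≤ ρ ^ 2 / (K * (T - τ)) := by
      rw [le_div_iff₀ (by positivity), hdd]
      refine le_trans (le_of_eq ?_) hR
      field_simp
    have e3 : d ^ (-β) ≤ (d ^ (m + 1))⁻¹ := by
      rw [← Real.rpow_natCast, ← Real.rpow_neg h4.le]
      apply Real.rpow_le_rpow_of_exponent_ge h4 h3
      push_cast
      linarith
    have e4 : R' * (d ^ (m + 1))⁻¹ ≤ d * (ρ ^ 2 / (K * (T - τ))) ^ (m + 2) := by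
      calc R' * (d ^ (m + 1))⁻¹ ≤ R' ^ (m + 2) * (d ^ (m + 1))⁻¹ := by
            gcongr
            exact le_self_pow₀ hR'1 (by omega)
        _ = d * (R' / d) ^ (m + 2) := alg4 m h4
        _ ≤ _ := by gcongr
    have e5 : M ≤ ε * R' := by
      rw [hR', mul_add, mul_div_cancel₀ _ hε0.ne']
      linarith
    rw [e1]
    calc M * (S * d ^ (-β)) ≤ (ε * R') * (S * (d ^ (m + 1))⁻¹) := by gcongr
      _ = S * ε * (R' * (d ^ (m + 1))⁻¹) := by ring
      _ < _ := by
        refine mul_lt_mul_of_pos_left ?_ (by positivity)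
        linarith
  · intro τ hτ x hx heq
    obtain ⟨h1, h2, h3, h4⟩ := hd τ hτ
    have hty := (le_abs_self _).trans
      (htypeI τ ⟨ht1.le.trans hτ.1, by linarith⟩ x hx)
    rw [heq] at hty
    have hWp := hWpos τ hτ x
    have pot1 := pot hp hM h1 hWp hty
    have hWx := hWn τ hτ x
    rw [hWtn τ hτ x, hLn τ hτ x]
    set ξ := ‖x - b‖ ^ 2 / (K * (T - τ)) with hξ
    have hξ0 : 0 ≤ ξ := by positivity
    set d := (T - τ) / s with hdd
    have hp1 : ξ ^ (m + 1) ≤ 1 + ξ ^ (m + 2) := by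
      rcases le_total ξ 1 with h | h
      · have := pow_le_one₀ (n := m + 1) hξ0 h
        have : 0 ≤ ξ ^ (m + 2) := by positivity
        linarith
      · have : ξ ^ (m + 1) ≤ ξ ^ (m + 2) := pow_le_pow_right₀ h (by omega)
        linarith
    have hX0 : 0 ≤ ξ ^ (m + 2) := by positivity
    have hm0 : (0:ℝ) ≤ m := by positivity
    have hP : 0 < S * ε * (1 / s) := by positivity
    suffices hmain : |W τ x| ^ (p - 1) * W τ x <
        S * ε * (1 / s) * (1 / 2 + (m + 1 / 2) * ξ ^ (m + 2)) by
      have := mul_le_mul_of_nonneg_left hp1 hP.le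
      nlinarith
    rcases le_total (d * ξ ^ (m + 2)) 1 with h | h
    · have hW3 : W τ x ≤ 3 * ε * S := by
        rw [hWx]
        have : S * ε * (2 - d + d * ξ ^ (m + 2)) ≤ S * ε * 3 := by
          gcongr; linarith
        linarith
      have pot2 := pot hp (by positivity : 0 < 3 * ε) hs0 hWp hW3
      rw [h3ε] at pot2
      calc _ ≤ 1 / 7 / s * W τ x := pot2
        _ ≤ 1 / 7 / s * (3 * ε * S) := by gcongr
        _ = S * ε * (1 / s) * (3 / 7) := by ring
        _ < _ := by
          refine mul_lt_mul_of_pos_left ?_ hP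
          have : 0 ≤ (m + 1 / 2) * ξ ^ (m + 2) := by positivity
          linarith
    · have hW3 : W τ x ≤ S * ε * (3 * (d * ξ ^ (m + 2))) := by
        rw [hWx]
        gcongr; linarith
      calc _ ≤ M ^ (p - 1) / (T - τ) * W τ x := pot1
        _ ≤ M ^ (p - 1) / (T - τ) * (S * ε * (3 * (d * ξ ^ (m + 2)))) := by gcongr
        _ = S * ε * (1 / s) * (3 * M ^ (p - 1) * ξ ^ (m + 2)) := by
          rw [hdd]; field_simp
        _ < _ := by
          refine mul_lt_mul_of_pos_left ?_ hP
          have : 3 * M ^ (p - 1) * ξ ^ (m + 2) ≤ (m + 1 / 2) * ξ ^ (m + 2) := by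
            gcongr; linarith
          linarith

lemma eps_reg (N : ℕ) {p M : ℝ} (hp : 1 < p) (hM : 0 < M) :
    ∃ c > 0, ∃ R > 0, ∀ (Ω : Set (EuclideanSpace ℝ (Fin N))) (_ : IsOpen Ω)
      (u0 : EuclideanSpace ℝ (Fin N) → ℝ) (T : ℝ) (u : ℝ → EuclideanSpace ℝ (Fin N) → ℝ)
      (_ : IsClassicalSol Ω u0 p T u)
      (_ : ∀ t ∈ Ico (0:ℝ) T, ∀ x ∈ Ω, |u t x| ≤ M * (T - t) ^ (-(1 / (p - 1))))
      (t0 : ℝ) (_ : 0 < t0) (_ : t0 < T) (a : EuclideanSpace ℝ (Fin N)) (δ : ℝ) (_ : 0 < δ)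
      (_ : R * (T - t0) ≤ (δ / 4) ^ 2)
      (_ : ∫⁻ x in Ω ∩ ball a δ, ENNReal.ofReal (|u t0 x| ^ ((N : ℝ) * (p - 1) / 2))
        < ENNReal.ofReal c), ¬ BlowupPoint Ω u T a := by
  obtain ⟨ε, hε, R2, hR2, H2⟩ := step2 N hp hM
  obtain ⟨c, hc, R1, hR1, H1⟩ := step1 N hp hM hε
  refine ⟨c, hc, max R1 R2, by positivity, ?_⟩
  intro Ω hΩ u0 T u hsol htypeI t0 ht0 ht0T a δ hδ hR hInt hbl
  have hs : 0 < T - t0 := by linarith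
  have hRa : R1 * (T - t0) ≤ (δ / 4) ^ 2 :=
    (mul_le_mul_of_nonneg_right (le_max_left _ _) hs.le).trans hR
  have hRb : R2 * (T - (t0 + T) / 2) ≤ (δ / 4) ^ 2 := by
    refine le_trans ?_ ((mul_le_mul_of_nonneg_right (le_max_right R1 R2) hs.le).trans hR)
    gcongr; linarith
  have ht1 : 0 < (t0 + T) / 2 := by linarith
  have ht1T : (t0 + T) / 2 < T := by linarith
  -- one-sided bound
  have one : ∀ (v0 : EuclideanSpace ℝ (Fin N) → ℝ) (v : ℝ → EuclideanSpace ℝ (Fin N) → ℝ),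
      IsClassicalSol Ω v0 p T v → (∀ t x, |v t x| = |u t x|) →
      ∀ b ∈ Ω, b ∈ ball a (δ / 4) → ∀ t ∈ Ico ((t0 + T) / 2) T,
        v t b ≤ 2 * ε * (T - (t0 + T) / 2) ^ (-(1 / (p - 1))) := by
    intro v0 v hv habs b hb hba
    have hty : ∀ t ∈ Ico (0:ℝ) T, ∀ x ∈ Ω, |v t x| ≤ M * (T - t) ^ (-(1 / (p - 1))) := by
      intro t ht x hx; rw [habs]; exact htypeI t ht x hx
    refine H2 Ω hΩ v0 T v hv hty _ ht1 ht1T b (δ / 4) (by positivity) hRb ?_ hb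
    intro x hx hxb
    refine H1 Ω hΩ v0 T v hv hty t0 ht0 ht0T x (δ / 4) (by positivity) hRa ?_ hx
    simp only [habs]
    refine lt_of_le_of_lt (lintegral_mono_set (inter_subset_inter_right _ ?_)) hInt
    intro y hy
    rw [mem_ball] at hba ⊢
    rw [mem_closedBall] at hxb hy
    have h1 := dist_triangle y x a
    have h2 := dist_triangle x b a
    linarith
  obtain ⟨t, ht, x, ⟨hx, hxa⟩, hlt⟩ := hbl (2 * ε * (T - (t0 + T) / 2) ^ (-(1 / (p - 1))))
    (min (δ / 4) (T - (t0 + T) / 2)) (lt_min (by positivity) (by linarith))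
  have hxa' : x ∈ ball a (δ / 4) := ball_subset_ball (min_le_left _ _) hxa
  have ht' : t ∈ Ico ((t0 + T) / 2) T := by
    refine ⟨?_, ht.2⟩
    have := min_le_right (δ / 4) (T - (t0 + T) / 2)
    linarith [ht.1]
  have b1 := one u0 u hsol (fun _ _ => rfl) x hx hxa' t ht'
  have b2 := one _ _ hsol.neg (fun _ _ => abs_neg _) x hx hxa' t ht'
  have : |u t x| ≤ 2 * ε * (T - (t0 + T) / 2) ^ (-(1 / (p - 1))) := by
    rw [abs_le']; exact ⟨b1, b2⟩
  linarith

/-- if the local critical `L^{q*}` quantity over `Ω ∩ B_{r₀}(a₀)` has finite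
liminf as `t → T`, then a type I blow-up solution has at most finitely many blow-up points
in the ball `B_{r₀}(a₀)`. -/
theorem finitely_many_blowup_points_of_bounded_local_critical_norm
    (N : ℕ) (hN : 1 ≤ N)
    (Ω : Set (EuclideanSpace ℝ (Fin N))) (hΩ : IsOpen Ω)
    (p : ℝ) (hp : 1 < p)
    (u0 : EuclideanSpace ℝ (Fin N) → ℝ) (hu0 : ∃ C, ∀ x ∈ Ω, |u0 x| ≤ C)
    (T : ℝ) (hT : 0 < T)
    (u : ℝ → EuclideanSpace ℝ (Fin N) → ℝ)
    (hsol : IsClassicalSol Ω u0 p T u)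
    (hblowup : Tendsto (fun t => supNormOn Ω (u t)) (𝓝[<] T) (𝓝 (⊤ : ℝ≥0∞)))
    (M : ℝ) (hM : 0 < M)
    (htypeI : ∀ t ∈ Ico (0:ℝ) T, ∀ x ∈ Ω, |u t x| ≤ M * (T - t) ^ (-(1 / (p - 1))))
    (a₀ : EuclideanSpace ℝ (Fin N)) (r₀ : ℝ) (hr₀ : 0 < r₀)
    (hfin : liminf (fun t => ∫⁻ x in Ω ∩ ball a₀ r₀,
        ENNReal.ofReal (|u t x| ^ ((N : ℝ) * (p - 1) / 2))) (𝓝[<] T) < ⊤) :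
    {a : EuclideanSpace ℝ (Fin N) |
      a ∈ closure Ω ∧ a ∈ ball a₀ r₀ ∧ BlowupPoint Ω u T a}.Finite := by
  classical
  obtain ⟨c, hc, R, hR, H⟩ := eps_reg N hp hM
  obtain ⟨k, hk1, hk2⟩ := exists_between hfin
  have hfreq := frequently_lt_of_liminf_lt (by isBoundedDefault) hk1
  by_contra hinf
  obtain ⟨n, hn⟩ := exists_nat_gt (k.toReal / c)
  obtain ⟨A, hAS, hAn⟩ := (Set.not_finite.1 hinf : Set.Infinite _).exists_subset_card_eq n
  -- choice of the radius
  have hfilt : ∀ᶠ δ in 𝓝[>] (0:ℝ), 0 < δ ∧ (∀ a ∈ A, ball a δ ⊆ ball a₀ r₀) ∧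
      (∀ a ∈ A, ∀ b ∈ A, a ≠ b → Disjoint (ball a δ) (ball b δ)) := by
    refine (eventually_mem_nhdsWithin).and (Eventually.and ?_ ?_)
    · rw [Filter.eventually_all_finset]
      intro a ha
      have hab : dist a a₀ < r₀ := (hAS ha).2.1
      have : ∀ᶠ δ in 𝓝[>] (0:ℝ), δ < r₀ - dist a a₀ :=
        nhdsWithin_le_nhds (gt_mem_nhds (by linarith))
      filter_upwards [this] with δ hδ
      exact ball_subset_ball' (by linarith)
    · rw [Filter.eventually_all_finset]
      intro a ha
      rw [Filter.eventually_all_finset]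
      intro b hb
      by_cases hab : a = b
      · exact Eventually.of_forall fun _ h => absurd hab h
      · have : ∀ᶠ δ in 𝓝[>] (0:ℝ), δ < dist a b / 2 :=
          nhdsWithin_le_nhds (gt_mem_nhds (by have := dist_pos.2 hab; linarith))
        filter_upwards [this] with δ hδ _
        exact ball_disjoint_ball (by linarith)
  obtain ⟨δ, hδ, hδsub, hδdis⟩ := hfilt.exists
  -- choice of the time
  have htime : ∀ᶠ t in 𝓝[<] T, t < T ∧ 0 < t ∧ R * (T - t) ≤ (δ / 4) ^ 2 := by
    refine (eventually_mem_nhdsWithin).and (Eventually.and ?_ ?_)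
    · exact nhdsWithin_le_nhds (lt_mem_nhds hT)
    · have : ∀ᶠ t in 𝓝[<] T, T - (δ / 4) ^ 2 / R < t :=
        nhdsWithin_le_nhds (lt_mem_nhds (by
          have : 0 < (δ / 4) ^ 2 / R := by positivity
          linarith))
      filter_upwards [this] with t ht
      have h1 : T - t ≤ (δ / 4) ^ 2 / R := by linarith
      rw [le_div_iff₀ hR] at h1
      linarith
  obtain ⟨t0, htk, ht0T, ht0, htR⟩ := (hfreq.and_eventually htime).exists
  set f : EuclideanSpace ℝ (Fin N) → ℝ≥0∞ := fun x =>
    ENNReal.ofReal (|u t0 x| ^ ((N : ℝ) * (p - 1) / 2)) with hf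
  have hlow : ∀ a ∈ A, ENNReal.ofReal c ≤ ∫⁻ x in Ω ∩ ball a δ, f x := by
    intro a ha
    by_contra hlt
    push Not at hlt
    exact H Ω hΩ u0 T u hsol htypeI t0 ht0 ht0T a δ hδ htR hlt (hAS ha).2.2
  have hsum : ∑ a ∈ A, ∫⁻ x in Ω ∩ ball a δ, f x = ∫⁻ x in ⋃ a ∈ A, Ω ∩ ball a δ, f x := by
    rw [lintegral_biUnion_finset]
    · intro a ha b hb hab
      exact (hδdis a ha b hb hab).mono inter_subset_right inter_subset_right
    · intro a _
      exact hΩ.measurableSet.inter measurableSet_ball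
  have hle : ∑ a ∈ A, ∫⁻ x in Ω ∩ ball a δ, f x < k := by
    rw [hsum]
    refine lt_of_le_of_lt (lintegral_mono_set ?_) htk
    exact iUnion₂_subset fun a ha => inter_subset_inter_right _ (hδsub a ha)
  have hge : (n : ℝ≥0∞) * ENNReal.ofReal c ≤ ∑ a ∈ A, ∫⁻ x in Ω ∩ ball a δ, f x := by
    rw [← hAn, ← nsmul_eq_mul]
    exact Finset.card_nsmul_le_sum A _ _ hlow
  have hfinal := hge.trans_lt hle
  have := ENNReal.toReal_strict_mono hk2.ne hfinal
  rw [ENNReal.toReal_mul, ENNReal.toReal_natCast, ENNReal.toReal_ofReal hc.le] at this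
  rw [div_lt_iff₀ hc] at hn
  linarith
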